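/- Suppose Z ≤ 1/e and n ≥ max{8e, 16·log(1/Z)}. Let b_1, …, b_T be any real sequence with |b_t| ≤ μ for some 0 < μ ≤ 1, and let x_1, …, x_{T+1} be the deviations produced by Discounted-Normal-Predictor. Then for every interval [r, s] ⊆ [1, T] with length τ = s − r + 1, the cumulative reward satisfies Σ_{t=r}^{s} ( g(x_t)·b_t − (1/μ)·|g(x_t) − g(x_{t+1})| ) ≥ max( 0, Σ_{t=r}^{s} b_t + x_r − (τ/n)·(U(n) + 2μ) − U(n) ) − max(x_r, 0) − Z·τ. -/

import Mathlib

/-- The Gauss error function `erf(x) = (2/√π) ∫₀ˣ e^{−s²} ds`. -/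
noncomputable def erf (x : ℝ) : ℝ :=
  (2 / Real.sqrt Real.pi) * ∫ s in (0:ℝ)..x, Real.exp (-s ^ 2)

/-- The unclipped confidence function `g̃(x) = √(n/8) · Z · erf(x/√(8n)) · e^{x²/(16n)}`. -/
noncomputable def gtilde (n Z x : ℝ) : ℝ :=
  Real.sqrt (n / 8) * Z * erf (x / Real.sqrt (8 * n)) * Real.exp (x ^ 2 / (16 * n))

/-- The confidence function `g(x)`, the projection of `g̃(x)` onto `[0,1]`. -/
noncomputable def gconf (n Z x : ℝ) : ℝ := min (max (gtilde n Z x) 0) 1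

theorem aux_erf_deriv (x : ℝ) :
    HasDerivAt erf ((2 / Real.sqrt Real.pi) * Real.exp (-x ^ 2)) x := by
  have hc : Continuous (fun s : ℝ => Real.exp (-s ^ 2)) := by fun_prop
  have := intervalIntegral.integral_hasDerivAt_right (hc.intervalIntegrable 0 x)
    (hc.stronglyMeasurableAtFilter _ _) hc.continuousAt
  exact this.const_mul _

theorem aux_gt_deriv (n Z : ℝ) (hn : 0 < n) (x : ℝ) :
    HasDerivAt (gtilde n Z)
      (x * gtilde n Z x / (8 * n) + Z / (4 * Real.sqrt Real.pi) * Real.exp (-(x ^ 2 / (16 * n)))) x := by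
  have h1 : HasDerivAt (fun y : ℝ => erf (y / Real.sqrt (8 * n)))
      ((2 / Real.sqrt Real.pi) * Real.exp (-(x / Real.sqrt (8 * n)) ^ 2) * (1 / Real.sqrt (8 * n))) x :=
    (aux_erf_deriv _).comp x ((hasDerivAt_id x).div_const _)
  have h2 : HasDerivAt (fun y : ℝ => Real.exp (y ^ 2 / (16 * n)))
      (Real.exp (x ^ 2 / (16 * n)) * (2 * x / (16 * n))) x := by
    have := ((hasDerivAt_pow 2 x).div_const (16 * n)).exp
    convert this using 1
    norm_num
  have h3 := (h1.const_mul (Real.sqrt (n / 8) * Z)).mul h2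
  refine HasDerivAt.congr_deriv (f := gtilde n Z) h3 ?_
  have h8 : Real.sqrt (n / 8) * (1 / Real.sqrt (8 * n)) = 1 / 8 := by
    have h64 : 8 * n = (n / 8) * 8 ^ 2 := by ring
    have : Real.sqrt (8 * n) = Real.sqrt (n / 8) * 8 := by
      rw [h64, Real.sqrt_mul (by positivity), Real.sqrt_sq (by norm_num)]
    have hp : 0 < Real.sqrt (n / 8) := Real.sqrt_pos.2 (by positivity)
    rw [this]; field_simp
  have he : Real.exp (-(x / Real.sqrt (8 * n)) ^ 2) * Real.exp (x ^ 2 / (16 * n))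
      = Real.exp (-(x ^ 2 / (16 * n))) := by
    rw [← Real.exp_add, div_pow, Real.sq_sqrt (by positivity)]
    congr 1; field_simp; ring
  rw [← he]
  symm
  have e1 : Z / (4 * Real.sqrt Real.pi) = (1 / 8) * Z * (2 / Real.sqrt Real.pi) := by
    field_simp; ring
  rw [e1, ← h8]
  unfold gtilde
  field_simp
  ring

theorem aux_gt_cont (n Z : ℝ) (hn : 0 < n) : Continuous (gtilde n Z) :=
  continuous_iff_continuousAt.2 fun x => (aux_gt_deriv n Z hn x).continuousAt

theorem aux_erf_mono : Monotone erf :=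
  monotone_of_deriv_nonneg (fun x => (aux_erf_deriv x).differentiableAt)
    (fun x => by rw [(aux_erf_deriv x).deriv]; positivity)

theorem aux_erf_zero : erf 0 = 0 := by simp [erf]

theorem aux_gt_nonneg (n Z : ℝ) (hZ : 0 < Z) (x : ℝ) (hx : 0 ≤ x) :
    0 ≤ gtilde n Z x := by
  have : 0 ≤ erf (x / Real.sqrt (8 * n)) := by
    rw [← aux_erf_zero]; exact aux_erf_mono (by positivity)
  unfold gtilde; positivity

theorem aux_gt_nonpos (n Z : ℝ) (hZ : 0 < Z) (x : ℝ) (hx : x ≤ 0) :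
    gtilde n Z x ≤ 0 := by
  have : erf (x / Real.sqrt (8 * n)) ≤ 0 := by
    rw [← aux_erf_zero]; exact aux_erf_mono (div_nonpos_of_nonpos_of_nonneg hx (by positivity))
  unfold gtilde
  exact mul_nonpos_of_nonpos_of_nonneg
    (mul_nonpos_of_nonneg_of_nonpos (by positivity) this) (by positivity)

theorem aux_gt_mono (n Z : ℝ) (hn : 0 < n) (hZ : 0 < Z) : Monotone (gtilde n Z) :=
  monotone_of_deriv_nonneg (fun x => (aux_gt_deriv n Z hn x).differentiableAt)
    (fun x => by
      rw [(aux_gt_deriv n Z hn x).deriv]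
      have : 0 ≤ x * gtilde n Z x := by
        rcases le_total 0 x with h | h
        · exact mul_nonneg h (aux_gt_nonneg n Z hZ x h)
        · exact mul_nonneg_of_nonpos_of_nonpos h (aux_gt_nonpos n Z hZ x h)
      positivity)

theorem aux_g_mono (n Z : ℝ) (hn : 0 < n) (hZ : 0 < Z) : Monotone (gconf n Z) :=
  fun _ _ h => min_le_min_right _ (max_le_max_right _ (aux_gt_mono n Z hn hZ h))

theorem aux_sqrt_pi : (7 : ℝ) ≤ 4 * Real.sqrt Real.pi := by
  have : (7 / 4 : ℝ) ≤ Real.sqrt Real.pi :=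
    Real.le_sqrt_of_sq_le (by have := Real.pi_gt_d2; norm_num at *; linarith)
  linarith

theorem aux_gt_lip (n Z : ℝ) (hn : 0 < n) (hZ : 0 < Z) (u v : ℝ) (hu : 0 ≤ u) (huv : u ≤ v) :
    gtilde n Z v - gtilde n Z u ≤ (v - u) * (v * gtilde n Z v / (8 * n) + Z / 7) := by
  have := Convex.image_sub_le_mul_sub_of_deriv_le (convex_Icc u v) (f := gtilde n Z)
    (aux_gt_cont n Z hn).continuousOn
    (fun x _ => (aux_gt_deriv n Z hn x).differentiableAt.differentiableWithinAt)
    (C := v * gtilde n Z v / (8 * n) + Z / 7) (fun x hx => by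
      rw [interior_Icc] at hx
      rw [(aux_gt_deriv n Z hn x).deriv]
      have h0 : 0 ≤ x := hu.trans hx.1.le
      have h1 := aux_gt_mono n Z hn hZ hx.2.le
      have h2 : x * gtilde n Z x ≤ v * gtilde n Z v :=
        mul_le_mul hx.2.le h1 (aux_gt_nonneg n Z hZ x h0) (h0.trans hx.2.le)
      have h3 : Real.exp (-(x ^ 2 / (16 * n))) ≤ 1 :=
        Real.exp_le_one_iff.2 (by have : 0 ≤ x ^ 2 / (16 * n) := by positivity
                                  linarith)
      have h4 : Z / (4 * Real.sqrt Real.pi) ≤ Z / 7 := 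
        div_le_div_of_nonneg_left hZ.le (by norm_num) aux_sqrt_pi
      have h5 : 0 ≤ Z / (4 * Real.sqrt Real.pi) := by positivity
      have h6 : x * gtilde n Z x / (8 * n) ≤ v * gtilde n Z v / (8 * n) := by gcongr
      nlinarith) u ⟨le_rfl, huv⟩ v ⟨huv, le_rfl⟩ huv
  linarith

theorem aux_g_nonneg (n Z x : ℝ) : 0 ≤ gconf n Z x := le_min (le_max_right _ _) zero_le_one
theorem aux_g_le (n Z x : ℝ) : gconf n Z x ≤ 1 := min_le_right _ _
theorem aux_g_zero (n Z : ℝ) (hZ : 0 < Z) (x : ℝ) (hx : x ≤ 0) : gconf n Z x = 0 := by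
  unfold gconf; rw [max_eq_right (aux_gt_nonpos n Z hZ x hx)]; norm_num
theorem aux_g_eq (n Z : ℝ) (hZ : 0 < Z) (x : ℝ) (hx : 0 ≤ x) (h : gtilde n Z x ≤ 1) :
    gconf n Z x = gtilde n Z x := by
  unfold gconf; rw [max_eq_left (aux_gt_nonneg n Z hZ x hx), min_eq_left h]
theorem aux_g_one (n Z x : ℝ) (h : 1 ≤ gtilde n Z x) : gconf n Z x = 1 := by
  unfold gconf; exact min_eq_right (h.trans (le_max_left _ _))

theorem aux_g_lip (n Z : ℝ) (hn : 0 < n) (hZ : 0 < Z) (u v : ℝ) (hv : 0 ≤ v) (huv : u ≤ v) :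
    gconf n Z v - gconf n Z u ≤ (v - u) * (v * gconf n Z v / (8 * n) + Z / 7) := by
  have main : ∀ u, 0 ≤ u → u ≤ v →
      gconf n Z v - gconf n Z u ≤ (v - u) * (v * gconf n Z v / (8 * n) + Z / 7) := by
    intro u hu huv
    rcases le_total (gtilde n Z v) 1 with h | h
    · rw [aux_g_eq n Z hZ v hv h, aux_g_eq n Z hZ u hu ((aux_gt_mono n Z hn hZ huv).trans h)]
      exact aux_gt_lip n Z hn hZ u v hu huv
    · rw [aux_g_one n Z v h]
      rcases le_total 1 (gtilde n Z u) with h' | h'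
      · rw [aux_g_one n Z u h']
        have : 0 ≤ v - u := by linarith
        rw [sub_self]; positivity
      · obtain ⟨w, ⟨hw1, hw2⟩, hw⟩ := intermediate_value_Icc huv
          (aux_gt_cont n Z hn).continuousOn ⟨h', h⟩
        rw [aux_g_eq n Z hZ u hu h']
        have h1 := aux_gt_lip n Z hn hZ u w hu hw1
        rw [hw] at h1
        have h2 : w * 1 / (8 * n) ≤ v * 1 / (8 * n) := by gcongr
        have h3 : 0 ≤ w * 1 / (8 * n) := by have := hu.trans hw1; positivity
        refine h1.trans (mul_le_mul (by linarith) (by linarith) (by linarith) (by linarith))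
  rcases le_total 0 u with h | h
  · exact main u h huv
  · have := main 0 le_rfl hv
    rw [aux_g_zero n Z hZ 0 le_rfl] at this
    rw [aux_g_zero n Z hZ u h]
    refine this.trans (mul_le_mul_of_nonneg_right (by linarith) ?_)
    have := aux_g_nonneg n Z v
    positivity

theorem aux_g_cont (n Z : ℝ) (hn : 0 < n) : Continuous (gconf n Z) :=
  ((aux_gt_cont n Z hn).max continuous_const).min continuous_const

/-- The potential. -/
noncomputable def auxPhi (n Z x : ℝ) : ℝ := ∫ u in (0:ℝ)..x, gconf n Z u

theorem aux_phi_sub (n Z : ℝ) (hn : 0 < n) (x y : ℝ) :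
    auxPhi n Z y - auxPhi n Z x = ∫ u in x..y, gconf n Z u :=
  intervalIntegral.integral_interval_sub_left ((aux_g_cont n Z hn).intervalIntegrable _ _)
    ((aux_g_cont n Z hn).intervalIntegrable _ _)

/-- Convexity inequality. -/
theorem aux_phi_step (n Z : ℝ) (hn : 0 < n) (hZ : 0 < Z) (x y : ℝ) :
    auxPhi n Z y - auxPhi n Z x ≤ gconf n Z y * (y - x) := by
  rw [aux_phi_sub n Z hn]
  have hi := fun a b => (aux_g_cont n Z hn).intervalIntegrable (μ := MeasureTheory.volume) a b
  rcases le_total x y with h | h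
  · have := intervalIntegral.integral_mono_on h (hi x y)
      (intervalIntegrable_const (c := gconf n Z y)) (fun u hu => aux_g_mono n Z hn hZ hu.2)
    rw [intervalIntegral.integral_const, smul_eq_mul] at this
    linarith
  · have := intervalIntegral.integral_mono_on h 
      (intervalIntegrable_const (c := gconf n Z y)) (hi y x) (fun u hu => aux_g_mono n Z hn hZ hu.1)
    rw [intervalIntegral.integral_const, smul_eq_mul] at this
    rw [intervalIntegral.integral_symm]
    linarith

theorem aux_phi_zero (n Z : ℝ) : auxPhi n Z 0 = 0 := by simp [auxPhi]

theorem aux_phi_nonneg (n Z : ℝ) (hn : 0 < n) (hZ : 0 < Z) (x : ℝ) : 0 ≤ auxPhi n Z x := by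
  have := aux_phi_step n Z hn hZ x 0
  rw [aux_phi_zero, aux_g_zero n Z hZ 0 le_rfl] at this
  linarith

theorem aux_phi_le (n Z : ℝ) (hn : 0 < n) (hZ : 0 < Z) (x : ℝ) : auxPhi n Z x ≤ max x 0 := by
  have := aux_phi_step n Z hn hZ 0 x
  rw [aux_phi_zero] at this
  rcases le_total x 0 with h | h
  · rw [aux_g_zero n Z hZ x h] at this
    have := le_max_right x 0
    linarith
  · have h1 := aux_g_le n Z x
    have := le_max_left x 0
    nlinarith

theorem aux_phi_ge (n Z : ℝ) (hn : 0 < n) (hZ : 0 < Z) (U : ℝ) (hU : gtilde n Z U = 1) (x : ℝ) :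
    x - U ≤ auxPhi n Z x := by
  have := aux_phi_step n Z hn hZ x U
  rw [aux_g_one n Z U hU.ge] at this
  have := aux_phi_nonneg n Z hn hZ U
  linarith

set_option maxHeartbeats 1600000 in
theorem aux_step (n Z : ℝ) (hn : 16 ≤ n) (hZ : 0 < Z) (μ : ℝ) (hμ0 : 0 < μ) (hμ1 : μ ≤ 1)
    (x y b : ℝ) (hb : |b| ≤ μ) (hx : |x| ≤ n * μ) (hy : y = (1 - 1 / n) * x + b) :
    gconf n Z x * b - (1 / μ) * |gconf n Z x - gconf n Z y|
      ≥ auxPhi n Z y - auxPhi n Z x - Z := by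
  have hn0 : 0 < n := by linarith
  have hphi := aux_phi_step n Z hn0 hZ x y
  have hA0 := aux_g_nonneg n Z x
  have hB0 := aux_g_nonneg n Z y
  obtain ⟨hb1, hb2⟩ := abs_le.1 hb
  obtain ⟨hx1, hx2⟩ := abs_le.1 hx
  obtain ⟨q, hq⟩ : ∃ q, q = x / n := ⟨_, rfl⟩
  have hxq : x = n * q := by rw [hq]; field_simp
  have hq1 : q ≤ μ := by rw [hq]; exact (div_le_iff₀ hn0).2 (by linarith)
  have hq2 : -μ ≤ q := by rw [hq]; exact (le_div_iff₀ hn0).2 (by linarith)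
  have hyq : y = x - q + b := by rw [hy, hq]; ring
  rcases le_total y x with hyx | hyx
  · have hm := aux_g_mono n Z hn0 hZ hyx
    rcases le_total 0 x with h0 | h0
    · have hl := aux_g_lip n Z hn0 hZ y x h0 hyx
      rw [abs_of_nonneg (by linarith)]
      have hK : x * gconf n Z x / (8 * n) = q * gconf n Z x / 8 := by rw [hq]; field_simp
      rw [hK] at hl
      have hq0 : 0 ≤ q := by rw [hq]; positivity
      generalize gconf n Z x = A at *
      generalize gconf n Z y = B at *
      obtain ⟨d, hd⟩ : ∃ d, d = x - y := ⟨_, rfl⟩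
      rw [← hd] at hl
      have hd0 : 0 ≤ d := by linarith
      have hd2 : d ≤ 2 * μ := by linarith
      have h6 : (d + 1 / μ) * d ≤ 6 := by
        have h1 : d / μ ≤ 2 := (div_le_iff₀ hμ0).2 hd2
        have h2 : (d + 1 / μ) * d = d ^ 2 + d / μ := by ring
        nlinarith
      have hqA : 0 ≤ q * A := by positivity
      have h7 : (d + 1 / μ) * (A - B) ≤ 6 * (q * A / 8 + Z / 7) := by
        calc (d + 1 / μ) * (A - B) ≤ (d + 1 / μ) * (d * (q * A / 8 + Z / 7)) := by gcongr
          _ = ((d + 1 / μ) * d) * (q * A / 8 + Z / 7) := by ring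
          _ ≤ _ := by gcongr
      have hbd : b = q - d := by linarith
      have hyd : y - x = -d := by linarith
      rw [hyd] at hphi
      rw [hbd]
      linarith
    · rw [aux_g_zero n Z hZ x h0, aux_g_zero n Z hZ y (by linarith)] at *
      simp; linarith
  · have hm := aux_g_mono n Z hn0 hZ hyx
    rcases le_total 0 x with h0 | h0
    · have hl := aux_g_lip n Z hn0 hZ x y (by linarith) hyx
      have hl0 := aux_g_lip n Z hn0 hZ 0 x (by linarith) h0
      rw [aux_g_zero n Z hZ 0 le_rfl] at hl0
      rw [abs_of_nonpos (by linarith)]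
      have hq0 : 0 ≤ q := by rw [hq]; positivity
      have hyn : y ≤ n * μ := by
        rw [hyq, hxq]; nlinarith
      have hAp : gconf n Z x / n ≤ q * gconf n Z x + Z := by
        rcases le_total 1 x with h1 | h1
        · have : gconf n Z x / n ≤ q * gconf n Z x := by
            rw [hq, div_mul_eq_mul_div]; gcongr; nlinarith
          linarith
        · have e1 : x * gconf n Z x / (8 * n) ≤ gconf n Z x / 8 := by
            rw [div_le_div_iff₀ (by positivity) (by norm_num)]
            nlinarith
          have e2 : gconf n Z x ≤ 1 * (gconf n Z x / 8 + Z / 7) := by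
            have : (x - 0) * (x * gconf n Z x / (8 * n) + Z / 7)
                ≤ 1 * (gconf n Z x / 8 + Z / 7) := by
              gcongr
              linarith
            linarith
          have e3 : gconf n Z x / n ≤ gconf n Z x / 1 := by gcongr; linarith
          have : 0 ≤ q * gconf n Z x := by positivity
          linarith
      generalize gconf n Z x = A at *
      generalize gconf n Z y = B at *
      obtain ⟨d, hd⟩ : ∃ d, d = y - x := ⟨_, rfl⟩
      rw [← hd] at hl hphi
      have hd0 : 0 ≤ d := by linarith
      have hd2 : d ≤ μ := by linarith
      have hbd : b = q + d := by linarith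
      have hy0 : 0 ≤ y := by linarith
      have hyB : y * B / n ≤ (q + 1 / n) * B := by
        have : (q + 1 / n) * B = (x + 1) * B / n := by rw [hq]; ring
        rw [this]; gcongr; linarith
      have hB8 : y * B / (8 * n) ≤ B / 8 := by
        rw [div_le_div_iff₀ (by positivity) (by norm_num)]
        have : y * B ≤ n * B := by gcongr; nlinarith
        nlinarith
      have hBA : B - A ≤ 1 * (B / 8 + Z / 7) := by
        refine hl.trans ?_
        gcongr
        linarith
      have hp : 1 / n ≤ 1 / 16 := by gcongr
      have hp0 : 0 ≤ 1 / n := by positivity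
      have h8 : (q + 1 / n) * B ≤ (q + 1 / n) * ((8 / 7) * (A + Z / 7)) := by
        gcongr; linarith
      have h9 : (q + 1 / n) * ((8 / 7) * (A + Z / 7))
        = (8 / 7) * (q * A + A / n + q * Z / 7 + (1 / n) * Z / 7) := by ring
      have h10 : q * Z ≤ 1 * Z := by gcongr; linarith
      have h11 : (1 / n) * Z ≤ (1 / 16) * Z := by gcongr
      have hqA : 0 ≤ q * A := by positivity
      have e8 : y * B / (8 * n) = y * B / n / 8 := by field_simp
      have h3 : (d + 1 / μ) * d ≤ 2 := by
        have h1 : d / μ ≤ 1 := (div_le_iff₀ hμ0).2 (by linarith)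
        have h2 : (d + 1 / μ) * d = d ^ 2 + d / μ := by ring
        nlinarith
      have h4 : (d + 1 / μ) * (B - A) ≤ 2 * (y * B / (8 * n) + Z / 7) := by
        calc (d + 1 / μ) * (B - A) ≤ (d + 1 / μ) * (d * (y * B / (8 * n) + Z / 7)) := by gcongr
          _ = ((d + 1 / μ) * d) * (y * B / (8 * n) + Z / 7) := by ring
          _ ≤ _ := by gcongr
      rw [hbd]
      linarith
    · rw [aux_g_zero n Z hZ x h0] at *
      have hyμ : y ≤ μ := by
        rw [hyq, hxq]; nlinarith
      rcases le_total y 0 with hy0 | hy0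
      · rw [aux_g_zero n Z hZ y hy0] at *
        simp; linarith
      · have hphi' := aux_phi_step n Z hn0 hZ 0 y
        rw [aux_phi_zero] at hphi'
        have hp := aux_phi_nonneg n Z hn0 hZ x
        have hl := aux_g_lip n Z hn0 hZ 0 y hy0 hy0
        rw [aux_g_zero n Z hZ 0 le_rfl] at hl
        rw [zero_sub, abs_neg, abs_of_nonneg hB0]
        generalize gconf n Z y = B at *
        have h1 : y * B / (8 * n) ≤ B / 8 := by
          rw [div_le_div_iff₀ (by positivity) (by norm_num)]
          nlinarith
        have h2 : B ≤ y * (B / 8 + Z / 7) := by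
          have := mul_le_mul_of_nonneg_left h1 hy0
          linarith
        have h3 : (y + 1 / μ) * y ≤ 2 := by
          have h1 : y / μ ≤ 1 := (div_le_iff₀ hμ0).2 (by linarith)
          have h2 : (y + 1 / μ) * y = y ^ 2 + y / μ := by ring
          nlinarith
        have h4 : (y + 1 / μ) * B ≤ 2 * (B / 8 + Z / 7) := by
          calc (y + 1 / μ) * B ≤ (y + 1 / μ) * (y * (B / 8 + Z / 7)) := by gcongr
            _ = ((y + 1 / μ) * y) * (B / 8 + Z / 7) := by ring
            _ ≤ _ := by gcongr
        have h5 : B ≤ 1 * (B / 8 + Z / 7) := h2.trans (by gcongr; linarith)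
        linarith

/-- **Theorem 2 (first bound): reward lower bound for Discounted-Normal-Predictor.** -/
theorem dnp_reward_lower_bound
    (n Z : ℝ) (hn0 : 0 < n) (hZ0 : 0 < Z) (hZ : Z ≤ 1 / Real.exp 1)
    (hn : n ≥ max (8 * Real.exp 1) (16 * Real.log (1 / Z)))
    (U : ℝ) (hUpos : 0 < U) (hUdef : gtilde n Z U = 1)
    (hUuniq : ∀ y, 0 < y → gtilde n Z y = 1 → y = U)
    (T : ℕ) (b x : ℕ → ℝ)
    (μ : ℝ) (hμ0 : 0 < μ) (hμ1 : μ ≤ 1)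
    (hb : ∀ t, 1 ≤ t → t ≤ T → |b t| ≤ μ)
    (hx1 : x 1 = 0)
    (hxrec : ∀ t, 1 ≤ t → t ≤ T → x (t + 1) = (1 - 1 / n) * x t + b t)
    (r s : ℕ) (hr : 1 ≤ r) (hrs : r ≤ s) (hsT : s ≤ T) :
    ∑ t ∈ Finset.Icc r s,
        (gconf n Z (x t) * b t - (1 / μ) * |gconf n Z (x t) - gconf n Z (x (t + 1))|)
      ≥ max 0 (∑ t ∈ Finset.Icc r s, b t + x r
            - ((s : ℝ) - r + 1) / n * (U + 2 * μ) - U)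
        - max (x r) 0 - Z * ((s : ℝ) - r + 1) := by
  have he : (2 : ℝ) ≤ Real.exp 1 := by have := Real.add_one_le_exp (1 : ℝ); linarith
  have hn16 : 16 ≤ n := by have := (le_max_left _ _).trans hn; linarith
  have hxb : ∀ t, 1 ≤ t → t ≤ T → |x t| ≤ n * μ := by
    intro t ht
    induction t, ht using Nat.le_induction with
    | base => intro _; rw [hx1, abs_zero]; positivity
    | succ t ht ih =>
      intro hT
      have h1 := ih (by omega)
      rw [hxrec t ht (by omega)]
      have h2 : 0 ≤ 1 - 1 / n := by
        have : 1 / n ≤ 1 := (div_le_one hn0).2 (by linarith)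
        linarith
      calc |(1 - 1 / n) * x t + b t| ≤ |(1 - 1 / n) * x t| + |b t| := abs_add_le _ _
        _ = (1 - 1 / n) * |x t| + |b t| := by rw [abs_mul, abs_of_nonneg h2]
        _ ≤ (1 - 1 / n) * (n * μ) + μ := by
          gcongr
          exact hb t ht (by omega)
        _ = n * μ := by field_simp; ring
  have hstep1 := fun t (h1 : 1 ≤ t) (h2 : t ≤ T) => aux_step n Z hn16 hZ0 μ hμ0 hμ1 (x t) (x (t+1))
    (b t) (hb t h1 h2) (hxb t h1 h2) (hxrec t h1 h2)
  have hstep2 : ∀ t, 1 ≤ t → t ≤ T →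
      gconf n Z (x t) * b t - (1 / μ) * |gconf n Z (x t) - gconf n Z (x (t + 1))|
      ≥ auxPhi n Z (x (t+1)) - auxPhi n Z (x t) - Z + (x t - U - 2 * μ) / n := by
    intro t h1 h2
    rcases le_total (x t) (U + 2 * μ) with h | h
    · have : (x t - U - 2 * μ) / n ≤ 0 := div_nonpos_of_nonpos_of_nonneg (by linarith) hn0.le
      have := hstep1 t h1 h2
      linarith
    · have hr := hxrec t h1 h2
      have hq : x t / n ≤ μ := by
        have := (abs_le.1 (hxb t h1 h2)).2
        exact (div_le_iff₀ hn0).2 (by linarith)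
      have hbt := (abs_le.1 (hb t h1 h2)).1
      have hr' : x (t + 1) = x t - x t / n + b t := by rw [hr]; ring
      have hm := aux_gt_mono n Z hn0 hZ0
      have g1 : gconf n Z (x t) = 1 := aux_g_one _ _ _ (hUdef.symm.le.trans (hm (by linarith)))
      have g2 : gconf n Z (x (t+1)) = 1 := aux_g_one _ _ _ (hUdef.symm.le.trans (hm (by linarith)))
      have hp := aux_phi_step n Z hn0 hZ0 (x t) (x (t+1))
      rw [g2] at hp
      rw [g1, g2, sub_self, abs_zero]
      have : (x t - U - 2 * μ) / n ≤ x t / n := by gcongr; linarith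
      linarith
  have hsum : ∀ k, r ≤ k + 1 → k ≤ T →
      (∑ t ∈ Finset.Icc r k,
        (gconf n Z (x t) * b t - (1 / μ) * |gconf n Z (x t) - gconf n Z (x (t + 1))|)
        ≥ auxPhi n Z (x (k + 1)) - auxPhi n Z (x r) - Z * ((k : ℝ) - r + 1)) ∧
      (∑ t ∈ Finset.Icc r k,
        (gconf n Z (x t) * b t - (1 / μ) * |gconf n Z (x t) - gconf n Z (x (t + 1))|)
        ≥ auxPhi n Z (x (k + 1)) - auxPhi n Z (x r) - Z * ((k : ℝ) - r + 1)
          + (∑ t ∈ Finset.Icc r k, b t + x r - x (k + 1)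
            - ((k : ℝ) - r + 1) / n * (U + 2 * μ))) := by
    intro k
    induction k with
    | zero =>
      intro h1 h2
      have : r = 1 := by omega
      subst this
      simp
    | succ k ih =>
      intro h1 h2
      rcases Nat.lt_or_ge (k + 1) r with hlt | hge
      · have : r = k + 2 := by omega
        subst this
        rw [Finset.Icc_eq_empty (by omega)]
        have e0 : (((k + 1 : ℕ) : ℝ) - ((k + 2 : ℕ) : ℝ) + 1) = 0 := by push_cast; ring
        rw [e0]
        simp
      · obtain ⟨i1, i2⟩ := ih hge (by omega)
        rw [Finset.sum_Icc_succ_top hge, Finset.sum_Icc_succ_top hge]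
        have s1 := hstep1 (k + 1) (by omega) h2
        have s2 := hstep2 (k + 1) (by omega) h2
        have hr := hxrec (k + 1) (by omega) h2
        push_cast
        constructor
        · linarith
        · have e1 : ((k : ℝ) + 1 - r + 1) / n * (U + 2 * μ)
              = ((k : ℝ) - r + 1) / n * (U + 2 * μ) + (U + 2 * μ) / n := by ring
          have e2 : (x (k + 1) - U - 2 * μ) / n = x (k + 1) / n - (U + 2 * μ) / n := by ring
          have e3 : x (k + 1 + 1) = x (k + 1) - x (k + 1) / n + b (k + 1) := by rw [hr]; ring
          rw [e1]
          rw [e2] at s2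
          linarith
  obtain ⟨h1, h2⟩ := hsum s (by omega) hsT
  have p1 := aux_phi_nonneg n Z hn0 hZ0 (x (s + 1))
  have p2 := aux_phi_le n Z hn0 hZ0 (x r)
  have p3 := aux_phi_ge n Z hn0 hZ0 U hUdef (x (s + 1))
  rcases le_total 0 (∑ t ∈ Finset.Icc r s, b t + x r
            - ((s : ℝ) - r + 1) / n * (U + 2 * μ) - U) with h | h
  · rw [max_eq_right h]; linarith
  · rw [max_eq_left h]; linarith
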